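/- Let C₀ > 0 and let M be a positive integer. There exists a constant C > 0 such that for all real a, x, T > 0 with T ≤ x/3, every (a,x,T,C₀,M)-admissible test function φ, and every r ≥ max(a/x, 1), one has |φ̌(r)| ≤ C·min(r^{−3/2}, r^{−5/2}·x/T). -/

import Mathlib

open Real

/-- The modified Bessel function of imaginary order:
`K_{iν}(x) = ∫_0^∞ exp(−x cosh t) cos(νt) dt`. -/
noncomputable def KBessel (ν x : ℝ) : ℝ :=
  ∫ t in Set.Ioi (0:ℝ), Real.exp (-x * Real.cosh t) * Real.cos (ν * t)

/-- `f` is piecewise monotone on at most `M` subintervals of `[0,∞)`: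
there are points `0 = a 0 ≤ a 1 ≤ … ≤ a (M−1)` such that `f` is monotone or antitone
on each `[a i, a (i+1)]` for `i + 1 < M`, and on the final ray `[a (M−1), ∞)`. -/
def PiecewiseMono (f : ℝ → ℝ) (M : ℕ) : Prop :=
  ∃ a : ℕ → ℝ, a 0 = 0 ∧ Monotone a ∧
    (∀ i : ℕ, i + 1 < M →
      MonotoneOn f (Set.Icc (a i) (a (i + 1))) ∨
        AntitoneOn f (Set.Icc (a i) (a (i + 1)))) ∧
    (MonotoneOn f (Set.Ici (a (M - 1))) ∨ AntitoneOn f (Set.Ici (a (M - 1))))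

/-- An `(a,x,T,C₀,M)`-admissible test function. -/
def IsAdmissible (a x T C₀ : ℝ) (M : ℕ) (φ : ℝ → ℝ) : Prop :=
  ContDiff ℝ (⊤ : ℕ∞) φ ∧
  (∀ t : ℝ, 0 ≤ φ t ∧ φ t ≤ 1) ∧
  (∀ t : ℝ, a / (2 * x) ≤ t → t ≤ a / x → φ t = 1) ∧
  (∀ t : ℝ, t ≤ a / (2 * x + 2 * T) → φ t = 0) ∧
  (∀ t : ℝ, a / (x - T) ≤ t → φ t = 0) ∧
  (∀ t : ℝ, 0 ≤ t → |deriv φ t| ≤ C₀ * x ^ 2 / (a * T)) ∧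
  PiecewiseMono φ M ∧ PiecewiseMono (deriv φ) M

/-- The `K`-Bessel transform `φ̌(r) = cosh(πr) ∫_0^∞ K_{2ir}(u) φ(u) du/u`. -/
noncomputable def phiCheck (φ : ℝ → ℝ) (r : ℝ) : ℝ :=
  Real.cosh (Real.pi * r) * ∫ u in Set.Ioi (0:ℝ), KBessel (2 * r) u * φ u / u

open MeasureTheory Set Filter Topology

/-- auxiliary weighted integral -/
noncomputable def GI (g : ℝ → ℝ) (u : ℝ) : ℝ :=
  ∫ t in Set.Ioi (0:ℝ), g t * Real.exp (-u * Real.cosh t)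

lemma aux_le_cosh (t : ℝ) : t ≤ Real.cosh t := by
  rcases le_or_gt t 0 with h | h
  · exact h.trans (Real.cosh_pos t).le
  · exact (Real.self_le_sinh_iff.2 h.le).trans (Real.sinh_lt_cosh t).le

lemma aux_pow_exp (k : ℕ) {c y : ℝ} (hc : 0 < c) (hy : 0 ≤ y) :
    y ^ k * Real.exp (-c * y) ≤ k.factorial / c ^ k := by
  have h := Real.pow_div_factorial_le_exp _ (mul_nonneg hc.le hy) k
  have hk : (0:ℝ) < k.factorial := by positivity
  rw [div_le_iff₀ hk, mul_pow] at h
  rw [le_div_iff₀ (by positivity), neg_mul, Real.exp_neg]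
  have he := Real.exp_pos (c * y)
  calc y ^ k * (Real.exp (c*y))⁻¹ * c ^ k = (c^k * y^k) * (Real.exp (c*y))⁻¹ := by ring
    _ ≤ (Real.exp (c*y) * k.factorial) * (Real.exp (c*y))⁻¹ := by gcongr
    _ = k.factorial := by field_simp

lemma aux_bound (k : ℕ) {A u t y : ℝ} (hu : 0 < u) (hA : 0 ≤ A)
    (hy : |y| ≤ A * Real.cosh t ^ k) :
    ‖y * Real.exp (-u * Real.cosh t)‖ ≤
      (A * (k.factorial / (u/2) ^ k)) * Real.exp (-(u/2) * t) := by
  rw [Real.norm_eq_abs, abs_mul, abs_of_pos (Real.exp_pos _)]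
  have h1 := aux_pow_exp k (half_pos hu) (Real.cosh_pos t).le
  have h2 : Real.exp (-u * Real.cosh t) =
      Real.exp (-(u/2) * Real.cosh t) * Real.exp (-(u/2) * Real.cosh t) := by
    rw [← Real.exp_add]; ring_nf
  have h3 : Real.exp (-(u/2) * Real.cosh t) ≤ Real.exp (-(u/2) * t) := by
    apply Real.exp_le_exp.2
    nlinarith [aux_le_cosh t]
  calc |y| * Real.exp (-u * Real.cosh t)
      ≤ (A * Real.cosh t ^ k) * Real.exp (-u * Real.cosh t) := by gcongr
    _ = A * (Real.cosh t ^ k * Real.exp (-(u/2) * Real.cosh t)) *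
          Real.exp (-(u/2) * Real.cosh t) := by rw [h2]; ring
    _ ≤ A * (k.factorial / (u/2) ^ k) * Real.exp (-(u/2) * t) := by gcongr

lemma aux_integrable (k : ℕ) {A u : ℝ} (hu : 0 < u) (hA : 0 ≤ A) {g : ℝ → ℝ}
    (hg : Continuous g) (hb : ∀ t, |g t| ≤ A * Real.cosh t ^ k) :
    IntegrableOn (fun t => g t * Real.exp (-u * Real.cosh t)) (Ioi 0) := by
  refine Integrable.mono' ((exp_neg_integrableOn_Ioi 0 (half_pos hu)).const_mul
    (A * (k.factorial / (u/2) ^ k))) ?_ ?_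
  · exact (by fun_prop : Continuous (fun t => g t * Real.exp (-u * Real.cosh t))).aestronglyMeasurable
  · exact Eventually.of_forall fun t => aux_bound k hu hA (hb t)

lemma aux_tendsto (k : ℕ) {A u : ℝ} (hu : 0 < u) (hA : 0 ≤ A) {g : ℝ → ℝ}
    (hb : ∀ t, |g t| ≤ A * Real.cosh t ^ k) :
    Tendsto (fun t => g t * Real.exp (-u * Real.cosh t)) atTop (𝓝 0) := by
  apply squeeze_zero_norm (fun t => aux_bound k hu hA (hb t))
  have : Tendsto (fun t => Real.exp (-(u/2) * t)) atTop (𝓝 0) := by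
    apply Real.tendsto_exp_atBot.comp
    exact tendsto_id.const_mul_atTop_of_neg (by linarith)
  simpa using this.const_mul (A * (k.factorial / (u/2) ^ k))

lemma GI_hasDerivAt (k : ℕ) {A u : ℝ} (hu : 0 < u) (hA : 0 ≤ A) {g : ℝ → ℝ}
    (hg : Continuous g) (hb : ∀ t, |g t| ≤ A * Real.cosh t ^ k) :
    HasDerivAt (GI g) (- GI (fun t => g t * Real.cosh t) u) u := by
  have hb' : ∀ t, |g t * Real.cosh t| ≤ A * Real.cosh t ^ (k+1) := fun t => by
    rw [abs_mul, abs_of_pos (Real.cosh_pos t), pow_succ, ← mul_assoc]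
    exact mul_le_mul_of_nonneg_right (hb t) (Real.cosh_pos t).le
  have key := (hasDerivAt_integral_of_dominated_loc_of_deriv_le (μ := volume.restrict (Ioi (0:ℝ)))
    (F := fun u t => g t * Real.exp (-u * Real.cosh t))
    (F' := fun u t => -(g t * Real.cosh t * Real.exp (-u * Real.cosh t)))
    (x₀ := u) (s := Ioi (u/2))
    (bound := fun t => (A * ((k+1).factorial / (u/2/2) ^ (k+1))) * Real.exp (-(u/2/2) * t))
    (Ioi_mem_nhds (by linarith)) ?_ (aux_integrable k hu hA hg hb) ?_ ?_ ?_ ?_).2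
  · rw [integral_neg] at key
    exact key
  · exact Eventually.of_forall fun v =>
      (by fun_prop : Continuous (fun t => g t * Real.exp (-v * Real.cosh t))).aestronglyMeasurable
  · exact (by fun_prop : Continuous (fun t => -(g t * Real.cosh t * Real.exp (-u * Real.cosh t)))).aestronglyMeasurable
  · refine Eventually.of_forall fun t v hv => ?_
    have hv' : u/2 < v := hv
    rw [norm_neg]
    refine le_trans ?_ (aux_bound (k+1) (half_pos hu) hA (hb' t))
    rw [norm_mul, norm_mul (g t * Real.cosh t)]
    refine mul_le_mul_of_nonneg_left ?_ (norm_nonneg _)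
    rw [Real.norm_eq_abs, Real.norm_eq_abs, abs_of_pos (Real.exp_pos _), abs_of_pos (Real.exp_pos _)]
    apply Real.exp_le_exp.2
    nlinarith [Real.cosh_pos t]
  · exact (exp_neg_integrableOn_Ioi 0 (half_pos (half_pos hu))).const_mul _
  · refine Eventually.of_forall fun t v _ => ?_
    have h1 : HasDerivAt (fun v : ℝ => -v * Real.cosh t) (-1 * Real.cosh t) v :=
      (hasDerivAt_id v).neg.mul_const _
    exact (h1.exp.const_mul (g t)).congr_deriv (by ring)

lemma GI_ftc (k : ℕ) {A u : ℝ} (hu : 0 < u) (hA : 0 ≤ A) {h h' : ℝ → ℝ}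
    (hd : ∀ t, HasDerivAt h (h' t) t) (hc : Continuous h')
    (h0 : h 0 = 0)
    (hb : ∀ t, |h t| ≤ A * Real.cosh t ^ k)
    (hb' : ∀ t, |h' t - u * Real.sinh t * h t| ≤ A * Real.cosh t ^ k) :
    GI (fun t => h' t - u * Real.sinh t * h t) u = 0 := by
  have hch : Continuous h := continuous_iff_continuousAt.2 fun t => (hd t).continuousAt
  have := integral_Ioi_of_hasDerivAt_of_tendsto' (a := 0)
    (f := fun t => h t * Real.exp (-u * Real.cosh t))
    (f' := fun t => (h' t - u * Real.sinh t * h t) * Real.exp (-u * Real.cosh t)) (m := 0)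
    (fun t _ => ?_) (aux_integrable k hu hA (by fun_prop) hb') (aux_tendsto k hu hA hb)
  · rw [GI, this, h0]; simp
  · have h1 : HasDerivAt (fun t : ℝ => -u * Real.cosh t) (-u * Real.sinh t) t :=
      (Real.hasDerivAt_cosh t).const_mul _
    exact ((hd t).mul h1.exp).congr_deriv (by ring)

lemma GI_add (k : ℕ) {A u : ℝ} (hu : 0 < u) (hA : 0 ≤ A) {g h : ℝ → ℝ}
    (hg : Continuous g) (hb : ∀ t, |g t| ≤ A * Real.cosh t ^ k)
    (hh : Continuous h) (hbh : ∀ t, |h t| ≤ A * Real.cosh t ^ k) (p q : ℝ) :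
    GI (fun t => p * g t + q * h t) u = p * GI g u + q * GI h u := by
  unfold GI
  rw [← integral_const_mul, ← integral_const_mul, ← integral_add]
  · congr 1; ext t; ring
  · exact (aux_integrable k hu hA hg hb).const_mul _
  · exact (aux_integrable k hu hA hh hbh).const_mul _

/-- I_k -/
noncomputable def II (ν : ℝ) (k : ℕ) (u : ℝ) : ℝ :=
  GI (fun t => Real.cos (ν * t) * Real.cosh t ^ k) u

/-- J -/
noncomputable def JJ (ν : ℝ) (u : ℝ) : ℝ :=
  GI (fun t => Real.sin (ν * t) * Real.sinh t) u

lemma II_zero (ν u : ℝ) : KBessel ν u = II ν 0 u := by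
  unfold KBessel II GI
  congr 1; ext t; simp [mul_comm]

lemma II_b (ν : ℝ) (k : ℕ) (t : ℝ) : |Real.cos (ν * t) * Real.cosh t ^ k| ≤ 1 * Real.cosh t ^ k := by
  rw [abs_mul, abs_of_pos (pow_pos (Real.cosh_pos t) k)]
  have := (Real.cosh_pos t)
  gcongr
  exact Real.abs_cos_le_one _

lemma II_hasDerivAt (ν : ℝ) (k : ℕ) {u : ℝ} (hu : 0 < u) :
    HasDerivAt (II ν k) (- II ν (k+1) u) u := by
  have := GI_hasDerivAt k hu zero_le_one (g := fun t => Real.cos (ν * t) * Real.cosh t ^ k)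
    (by fun_prop) (II_b ν k)
  simp only [mul_assoc, ← pow_succ] at this
  exact this

lemma abs_sinh_le (t : ℝ) : |Real.sinh t| ≤ Real.cosh t := by
  rw [abs_le]
  have := Real.cosh_sq t
  constructor <;> nlinarith [Real.cosh_pos t, Real.sinh_lt_cosh t, Real.sinh_lt_cosh (-t), Real.sinh_neg t, Real.cosh_neg t]

lemma JJ_eq (ν : ℝ) {u : ℝ} (hu : 0 < u) : u * JJ ν u = ν * II ν 0 u := by
  have h := GI_ftc 1 (A := 1 + |ν| + u) hu (by positivity) (h := fun t => Real.sin (ν * t))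
    (h' := fun t => ν * Real.cos (ν * t)) (fun t => ?_) (by fun_prop) (by simp) ?_ ?_
  · have e : (fun t => ν * Real.cos (ν * t) - u * Real.sinh t * Real.sin (ν * t)) =
      fun t => ν * (Real.cos (ν * t) * Real.cosh t ^ 0) + (-u) * (Real.sin (ν * t) * Real.sinh t) := by
      ext t; ring
    rw [e, GI_add 1 hu zero_le_one (by fun_prop) _ (by fun_prop) _] at h
    · change ν * II ν 0 u + (-u) * JJ ν u = 0 at h
      linarith
    · intro t
      have h1 := Real.one_le_cosh t
      rw [pow_zero, mul_one, one_mul, pow_one]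
      exact (Real.abs_cos_le_one _).trans h1
    · intro t
      rw [abs_mul, pow_one]
      exact mul_le_mul (Real.abs_sin_le_one _) (abs_sinh_le t) (abs_nonneg _) zero_le_one
  · have h1 : HasDerivAt (fun t : ℝ => ν * t) ν t := by simpa using (hasDerivAt_id t).const_mul ν
    convert h1.sin using 1
    ring
  · intro t
    have := Real.one_le_cosh t
    have := Real.abs_sin_le_one (ν * t)
    have := abs_nonneg ν
    simp only [pow_one]
    nlinarith
  · intro t
    have h1 := Real.one_le_cosh t
    have h2 := Real.abs_sin_le_one (ν * t)
    have h3 := Real.abs_cos_le_one (ν * t)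
    have h4 := abs_nonneg ν
    have h5 := abs_sinh_le t
    calc _ ≤ |ν * Real.cos (ν * t)| + |u * Real.sinh t * Real.sin (ν * t)| := abs_sub _ _
      _ = |ν| * |Real.cos (ν * t)| + u * |Real.sinh t| * |Real.sin (ν * t)| := by
        rw [abs_mul, abs_mul, abs_mul, abs_of_pos hu]
      _ ≤ |ν| * 1 + u * Real.cosh t * 1 := by gcongr
      _ ≤ _ := by rw [pow_one]; nlinarith

lemma II_ode (ν : ℝ) {u : ℝ} (hu : 0 < u) :
    u ^ 2 * II ν 2 u - u * II ν 1 u = (u ^ 2 - ν ^ 2) * II ν 0 u := by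
  have hA : 0 ≤ 1 + |ν| + u + ν^2 + u^2 := by positivity
  have hcc : ∀ t, Real.cosh t ≤ Real.cosh t ^ 2 := fun t => by
    have := Real.one_le_cosh t
    nlinarith
  have h := GI_ftc 2 (A := 1 + |ν| + u + ν^2 + 2 * u^2) hu (by positivity)
    (h := fun t => u * (Real.cos (ν * t) * Real.sinh t) - ν * Real.sin (ν * t))
    (h' := fun t => u * (-ν * Real.sin (ν * t) * Real.sinh t + Real.cos (ν * t) * Real.cosh t)
      - ν * (ν * Real.cos (ν * t))) (fun t => ?_) (by fun_prop) (by simp) ?_ ?_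
  · have e : (fun t => u * (-ν * Real.sin (ν * t) * Real.sinh t + Real.cos (ν * t) * Real.cosh t)
      - ν * (ν * Real.cos (ν * t)) - u * Real.sinh t *
        (u * (Real.cos (ν * t) * Real.sinh t) - ν * Real.sin (ν * t))) =
      fun t => 1 * ((u^2-ν^2) * (Real.cos (ν * t) * Real.cosh t ^ 0) +
          (u) * (Real.cos (ν * t) * Real.cosh t ^ 1)) +
            (-u^2) * (Real.cos (ν * t) * Real.cosh t ^ 2) := by
      ext t
      have := Real.cosh_sq t
      rw [this]
      ring
    have b0 : ∀ t, |Real.cos (ν * t) * Real.cosh t ^ 0| ≤ 1 * Real.cosh t ^ 1 := fun t => by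
      refine (II_b ν 0 t).trans ?_
      simp
    rw [e, GI_add 2 (A := |u^2-ν^2| + u + 1) hu (by positivity) (by fun_prop) _ (by fun_prop) _,
      GI_add 1 hu zero_le_one (by fun_prop) b0 (by fun_prop) (II_b ν 1)] at h
    · change 1 * ((u^2-ν^2) * II ν 0 u + u * II ν 1 u) + (-u^2) * II ν 2 u = 0 at h
      linarith
    · intro t
      have h1 := hcc t
      have h2 := b0 t
      have h3 := II_b ν 1 t
      have h4 := Real.one_le_cosh t
      rw [pow_one, one_mul] at h2 h3
      calc _ ≤ |(u^2-ν^2) * (Real.cos (ν * t) * Real.cosh t ^ 0)| +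
          |(u) * (Real.cos (ν * t) * Real.cosh t ^ 1)| := abs_add_le _ _
        _ = |u^2-ν^2| * |Real.cos (ν * t) * Real.cosh t ^ 0| +
          u * |Real.cos (ν * t) * Real.cosh t ^ 1| := by rw [abs_mul (u^2-ν^2), abs_mul u, abs_of_pos hu]
        _ ≤ |u^2-ν^2| * Real.cosh t ^ 2 + u * Real.cosh t ^ 2 := by
          gcongr
          · exact h2.trans h1
          · rw [pow_one]; exact h3.trans h1
        _ ≤ _ := by nlinarith [sq_nonneg (Real.cosh t)]
    · intro t
      refine (II_b ν 2 t).trans ?_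
      gcongr
      nlinarith [abs_nonneg (u^2-ν^2)]
  · have h1 : HasDerivAt (fun t : ℝ => ν * t) ν t := by simpa using (hasDerivAt_id t).const_mul ν
    exact (((h1.cos.mul (Real.hasDerivAt_sinh t)).const_mul u).sub (h1.sin.const_mul ν)).congr_deriv (by ring)
  · intro t
    have h1 := hcc t
    have h2 := Real.abs_sin_le_one (ν * t)
    have h3 := Real.abs_cos_le_one (ν * t)
    have h4 := abs_nonneg ν
    have h5 := abs_sinh_le t
    have h6 := Real.one_le_cosh t
    calc _ ≤ |u * (Real.cos (ν * t) * Real.sinh t)| + |ν * Real.sin (ν * t)| := abs_sub _ _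
      _ = u * (|Real.cos (ν * t)| * |Real.sinh t|) + |ν| * |Real.sin (ν * t)| := by
        rw [abs_mul, abs_mul, abs_mul, abs_of_pos hu]
      _ ≤ u * (1 * Real.cosh t) + |ν| * 1 := by gcongr
      _ ≤ u * (Real.cosh t ^ 2) + |ν| * Real.cosh t ^ 2 := by
        rw [one_mul]; gcongr; linarith
      _ ≤ _ := by nlinarith [sq_nonneg (Real.cosh t), sq_nonneg u, sq_nonneg ν, mul_nonneg (sq_nonneg u) (sq_nonneg (Real.cosh t)), mul_nonneg (sq_nonneg ν) (sq_nonneg (Real.cosh t))]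
  · intro t
    have h1 := hcc t
    have h3 := Real.abs_cos_le_one (ν * t)
    have h6 := Real.one_le_cosh t
    have hs := Real.cosh_sq t
    have e : u * (-ν * Real.sin (ν * t) * Real.sinh t + Real.cos (ν * t) * Real.cosh t)
      - ν * (ν * Real.cos (ν * t)) - u * Real.sinh t *
        (u * (Real.cos (ν * t) * Real.sinh t) - ν * Real.sin (ν * t)) =
        Real.cos (ν * t) * (u * Real.cosh t - ν^2 - u^2 * Real.sinh t ^2) := by ring
    rw [e, abs_mul]
    calc _ ≤ 1 * |u * Real.cosh t - ν^2 - u^2 * Real.sinh t ^2| := by gcongr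
      _ ≤ u * Real.cosh t + ν^2 + u^2 * Real.sinh t ^2 := by
        rw [one_mul, abs_le]
        have : 0 ≤ u * Real.cosh t := by positivity
        constructor <;> nlinarith [sq_nonneg (u * Real.sinh t), sq_nonneg ν]
      _ ≤ u * Real.cosh t ^ 2 + ν^2 * Real.cosh t ^ 2 + u^2 * Real.cosh t ^2 := by
        have k1 : u * Real.cosh t ≤ u * Real.cosh t ^ 2 := by gcongr
        have k2 : ν^2 ≤ ν^2 * Real.cosh t ^ 2 := by nlinarith [sq_nonneg ν]
        have k3 : u^2 * Real.sinh t ^ 2 ≤ u^2 * Real.cosh t ^ 2 := by nlinarith [sq_nonneg u]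
        linarith
      _ ≤ _ := by nlinarith [mul_nonneg (abs_nonneg ν) (sq_nonneg (Real.cosh t)), mul_nonneg (sq_nonneg u) (sq_nonneg (Real.cosh t)), sq_nonneg (Real.cosh t)]
lemma expexp_integrable : Integrable (fun τ : ℝ => Real.exp τ * Real.exp (-Real.exp τ)) := by
  have h := (integrableOn_image_iff_integrableOn_abs_deriv_smul (s := univ) (f := Real.exp)
    (f' := Real.exp) MeasurableSet.univ (fun x _ => (Real.hasDerivAt_exp x).hasDerivWithinAt)
    (Real.exp_injective.injOn) (fun y => Real.exp (-y))).1
  rw [image_univ, Real.range_exp, integrableOn_univ] at h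
  have h2 := h (by simpa using exp_neg_integrableOn_Ioi 0 one_pos)
  simpa [abs_of_pos (Real.exp_pos _)] using h2

/-- integrand -/
noncomputable def HF (ν δ τ : ℝ) : ℂ :=
  Complex.exp ((1 - Complex.I * ν) * τ) * ((Real.exp (-Real.exp τ - δ * Real.exp (-τ)) : ℝ) : ℂ)

lemma HF_cont (ν δ : ℝ) : Continuous (HF ν δ) := by
  unfold HF; fun_prop

lemma HF_bound (ν : ℝ) {δ : ℝ} (hδ : 0 ≤ δ) (τ : ℝ) :
    ‖HF ν δ τ‖ ≤ Real.exp τ * Real.exp (-Real.exp τ) := by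
  unfold HF
  rw [norm_mul, Complex.norm_exp, Complex.norm_real, Real.norm_eq_abs, abs_of_pos (Real.exp_pos _)]
  have : ((1 - Complex.I * ν) * τ : ℂ).re = τ := by simp
  rw [this]
  gcongr
  have := Real.exp_pos (-τ)
  nlinarith

lemma HF_integrable (ν : ℝ) {δ : ℝ} (hδ : 0 ≤ δ) : Integrable (HF ν δ) :=
  expexp_integrable.mono' (HF_cont ν δ).aestronglyMeasurable
    (Eventually.of_forall (HF_bound ν hδ))

lemma HF_zero (ν : ℝ) : ∫ τ, HF ν 0 τ = Complex.Gamma (1 - Complex.I * ν) := by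
  rw [Complex.Gamma_eq_integral (by simp), Complex.GammaIntegral]
  have h := integral_image_eq_integral_abs_deriv_smul (s := univ) (f := Real.exp)
    (f' := Real.exp) MeasurableSet.univ (fun x _ => (Real.hasDerivAt_exp x).hasDerivWithinAt)
    (Real.exp_injective.injOn)
    (fun x : ℝ => ((Real.exp (-x) : ℝ) : ℂ) * (x : ℂ) ^ ((1 - Complex.I * ν) - 1 : ℂ))
  rw [image_univ, Real.range_exp, setIntegral_univ] at h
  rw [h]
  congr 1; ext τ
  unfold HF
  rw [abs_of_pos (Real.exp_pos _), Complex.real_smul]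
  have hne : ((Real.exp τ : ℝ) : ℂ) ≠ 0 := by exact_mod_cast (Real.exp_pos τ).ne'
  rw [Complex.cpow_def_of_ne_zero hne, ← Complex.ofReal_log (Real.exp_pos τ).le, Real.log_exp]
  have : Complex.exp ((1 - Complex.I * ν) * τ) =
      ((Real.exp τ : ℝ) : ℂ) * Complex.exp (τ * (1 - Complex.I * ν - 1)) := by
    rw [Complex.ofReal_exp, ← Complex.exp_add]; ring_nf
  rw [this]; simp only [zero_mul, sub_zero]; ring

lemma HF_tendsto (ν : ℝ) :
    Tendsto (fun u : ℝ => ∫ τ, HF ν (u^2/4) τ) (𝓝[>] 0) (𝓝 (Complex.Gamma (1 - Complex.I * ν))) := by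
  rw [← HF_zero]
  refine tendsto_integral_filter_of_dominated_convergence _ ?_ ?_ expexp_integrable ?_
  · exact Eventually.of_forall fun u => (HF_cont _ _).aestronglyMeasurable
  · exact Eventually.of_forall fun u => Eventually.of_forall fun τ => HF_bound ν (by positivity) τ
  · refine Eventually.of_forall fun τ => ?_
    have : Continuous (fun u : ℝ => HF ν (u^2/4) τ) := by unfold HF; fun_prop
    have h := this.tendsto 0
    simp only [ne_eq, OfNat.ofNat_ne_zero, not_false_eq_true, zero_pow, zero_div] at h
    exact h.mono_left nhdsWithin_le_nhds

lemma Gamma_normSq {ν : ℝ} (hν : 0 < ν) :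
    ‖Complex.Gamma (1 - Complex.I * ν)‖ ^ 2 = π * ν / Real.sinh (π * ν) := by
  have h1 := Complex.Gamma_mul_Gamma_one_sub (Complex.I * ν)
  have h2 := Complex.Gamma_add_one (Complex.I * ν) (by simp [hν.ne'])
  have h3 : Complex.Gamma (Complex.I * ν + 1) = (starRingEnd ℂ) (Complex.Gamma (1 - Complex.I * ν)) := by
    rw [← Complex.Gamma_conj]; congr 1; simp; ring
  have hs : Real.sinh (π * ν) ≠ 0 := by
    have : 0 < Real.sinh (π * ν) := Real.sinh_pos_iff.2 (by positivity)
    exact this.ne'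
  have h4 : Complex.sin (π * (Complex.I * ν)) = (Real.sinh (π * ν) : ℂ) * Complex.I := by
    rw [show (π * (Complex.I * ν) : ℂ) = ((π * ν : ℝ) : ℂ) * Complex.I by push_cast; ring,
      Complex.sin_mul_I, Complex.ofReal_sinh]
  have hsC : ((Real.sinh (π * ν) : ℝ) : ℂ) ≠ 0 := by exact_mod_cast hs
  have h5 : ((‖Complex.Gamma (1 - Complex.I * ν)‖ ^ 2 : ℝ) : ℂ) = ((π * ν / Real.sinh (π * ν) : ℝ) : ℂ) := by
    rw [Complex.ofReal_pow, ← Complex.mul_conj', ← h3, h2, mul_comm, mul_assoc, h1, h4]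
    push_cast at hsC ⊢
    field_simp
  exact_mod_cast h5

lemma II_norm (ν : ℝ) {u : ℝ} (hu : 0 < u) :
    u^2 * (II ν 1 u)^2 + ν^2 * (II ν 0 u)^2 = ‖∫ τ, HF ν (u^2/4) τ‖^2 := by
  have hJ := JJ_eq ν hu
  set f : ℝ → ℂ := fun t => Complex.exp ((1 - Complex.I * ν) * t) *
    ((Real.exp (-u * Real.cosh t) : ℝ) : ℂ) with hf
  set L := Real.log (2/u) with hL
  have hexpL : Real.exp L = 2/u := Real.exp_log (by positivity)
  have hexpL' : Real.exp (-L) = u/2 := by rw [Real.exp_neg, hexpL, inv_div]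
  have hshift : ∀ τ, f (τ + L) = Complex.exp ((1 - Complex.I * ν) * L) * HF ν (u^2/4) τ := by
    intro τ
    have e1 : -u * Real.cosh (τ + L) = -Real.exp τ - u^2/4 * Real.exp (-τ) := by
      rw [Real.cosh_eq, neg_add, Real.exp_add, Real.exp_add, hexpL, hexpL']
      field_simp
      ring
    simp only [hf, HF]
    rw [e1, Complex.ofReal_add, mul_add, Complex.exp_add]
    ring
  have hi : Integrable f := by
    have h1 : Integrable (fun τ => f (τ + L)) := by
      simp_rw [hshift]
      exact (HF_integrable ν (by positivity)).const_mul _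
    have h2 := h1.comp_sub_right L
    simpa using h2
  have e1 : ∫ t, f t = Complex.exp ((1 - Complex.I * ν) * L) * ∫ τ, HF ν (u^2/4) τ := by
    rw [← integral_add_right_eq_self f L, ← integral_const_mul]
    simp_rw [hshift]
  have e2 : ∫ t, f t = 2 * ((II ν 1 u : ℂ) - Complex.I * JJ ν u) := by
    have i1 : IntegrableOn (fun t => (Real.cos (ν * t) * Real.cosh t ^ 1) * Real.exp (-u * Real.cosh t)) (Ioi 0) :=
      aux_integrable 1 hu zero_le_one (by fun_prop) (II_b ν 1)
    have i2 : IntegrableOn (fun t => (Real.sin (ν * t) * Real.sinh t) * Real.exp (-u * Real.cosh t)) (Ioi 0) := by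
      refine aux_integrable 1 hu zero_le_one (by fun_prop) ?_
      intro t
      rw [abs_mul, pow_one]
      exact mul_le_mul (Real.abs_sin_le_one _) (abs_sinh_le t) (abs_nonneg _) zero_le_one
    have hneg := integral_comp_neg_Ioi (0:ℝ) f
    rw [neg_zero] at hneg
    rw [← intervalIntegral.integral_Iic_add_Ioi hi.integrableOn hi.integrableOn (b := 0), ← hneg]
    have i3 : IntegrableOn (fun t => f (-t)) (Ioi 0) := hi.comp_neg.integrableOn
    rw [← integral_add i3 hi.integrableOn]
    unfold II JJ GI
    rw [← integral_complex_ofReal, ← integral_complex_ofReal, ← integral_const_mul, ← integral_sub,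
      ← integral_const_mul]
    · congr 1; ext t
      simp only [hf]
      rw [Real.cosh_neg, ← add_mul]
      push_cast
      rw [pow_one, ← mul_assoc Complex.I, ← sub_mul, ← mul_assoc 2]
      congr 1
      have hc : Complex.cosh ((1 - Complex.I * ν) * t) =
          Complex.cos (ν * t) * Complex.cosh t - Complex.I * (Complex.sin (ν * t) * Complex.sinh t) := by
        rw [show (1 - Complex.I * ν) * t = (t:ℂ) - (ν * t) * Complex.I by ring, Complex.cosh_sub,
          Complex.cosh_mul_I, Complex.sinh_mul_I]
        ring
      rw [← hc, Complex.cosh]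
      ring_nf
    · exact i1.ofReal
    · exact i2.ofReal.const_mul _
  have e3 : ‖Complex.exp ((1 - Complex.I * ν) * L)‖ = 2/u := by
    rw [Complex.norm_exp]
    have : ((1 - Complex.I * ν) * L : ℂ).re = L := by simp
    rw [this, hexpL]
  have e4 : ‖(2:ℂ) * ((II ν 1 u : ℂ) - Complex.I * JJ ν u)‖ = 2/u * ‖∫ τ, HF ν (u^2/4) τ‖ := by
    rw [← e2, e1, norm_mul, e3]
  rw [norm_mul, Complex.norm_ofNat] at e4
  have e5 : ‖∫ τ, HF ν (u^2/4) τ‖ = u * ‖(II ν 1 u : ℂ) - Complex.I * JJ ν u‖ := by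
    field_simp at e4
    linarith
  rw [e5, mul_pow, ← Complex.normSq_eq_norm_sq, Complex.normSq_apply]
  simp
  linear_combination (-(ν * II ν 0 u) - u * JJ ν u) * hJ

lemma II_tendsto {ν : ℝ} (hν : 0 < ν) :
    Tendsto (fun u => u^2 * (II ν 1 u)^2 + ν^2 * (II ν 0 u)^2) (𝓝[>] 0)
      (𝓝 (π * ν / Real.sinh (π * ν))) := by
  rw [← Gamma_normSq hν]
  refine ((HF_tendsto ν).norm.pow 2).congr' ?_
  filter_upwards [self_mem_nhdsWithin] with u hu
  exact (II_norm ν hu).symm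

lemma energy {ν : ℝ} (hν : 0 < ν) {u : ℝ} (hu : 0 < u) :
    u^2 * (II ν 1 u)^2 + (ν^2 - u^2) * (II ν 0 u)^2 ≤ π * ν / Real.sinh (π * ν) := by
  have hd : ∀ v ∈ Ioi (0:ℝ), HasDerivAt (fun v => v^2 * (II ν 1 v)^2 + (ν^2 - v^2) * (II ν 0 v)^2)
      (-2 * v * (II ν 0 v)^2) v := by
    intro v hv
    have h0 := II_hasDerivAt ν 0 hv
    have h1 := II_hasDerivAt ν 1 hv
    have h2 := hasDerivAt_pow 2 v
    have ho := II_ode ν hv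
    refine ((h2.mul (h1.pow 2)).add ((h2.const_sub (ν^2)).mul (h0.pow 2))).congr_deriv ?_
    simp
    linear_combination (-2 * II ν 1 v) * ho
  have hanti : AntitoneOn (fun v => v^2 * (II ν 1 v)^2 + (ν^2 - v^2) * (II ν 0 v)^2) (Ioi 0) := by
    refine antitoneOn_of_deriv_nonpos (convex_Ioi 0)
      (fun v hv => (hd v hv).continuousAt.continuousWithinAt) ?_ ?_
    · rw [interior_Ioi]
      exact fun v hv => (hd v hv).differentiableAt.differentiableWithinAt
    · rw [interior_Ioi]
      intro v hv
      rw [(hd v hv).deriv]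
      have hv' : 0 < v := hv
      have := sq_nonneg (II ν 0 v)
      nlinarith
  refine ge_of_tendsto (II_tendsto hν) ?_
  filter_upwards [Ioo_mem_nhdsGT hu] with v hv
  have h := hanti (show v ∈ Ioi 0 from hv.1) (show u ∈ Ioi 0 from hu) hv.2.le
  simp only at h
  refine h.trans ?_
  nlinarith [mul_nonneg (sq_nonneg v) (sq_nonneg (II ν 0 v))]

lemma energy_r {r u : ℝ} (hr : 1 ≤ r) (hu : 0 < u) :
    Real.cosh (π * r) ^ 2 * (u^2 * (II (2*r) 1 u)^2 + ((2*r)^2 - u^2) * (II (2*r) 0 u)^2) ≤ 8 * r := by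
  have h := energy (ν := 2*r) (by linarith) hu
  have hs : 0 < Real.sinh (π * r) := Real.sinh_pos_iff.2 (by positivity)
  have hs1 : 1 ≤ Real.sinh (π * r) := by
    have : π * r ≤ Real.sinh (π * r) := Real.self_le_sinh_iff.2 (by positivity)
    nlinarith [Real.pi_gt_three]
  have hc := Real.cosh_pos (π * r)
  have hcs := Real.cosh_sq (π * r)
  have e : Real.sinh (π * (2*r)) = 2 * Real.sinh (π * r) * Real.cosh (π * r) := by
    rw [← Real.sinh_two_mul]; ring_nf
  rw [e] at h
  refine (mul_le_mul_of_nonneg_left h (by positivity)).trans ?_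
  have e2 : Real.cosh (π * r) ^ 2 * (π * (2*r) / (2 * Real.sinh (π * r) * Real.cosh (π * r)))
     = π * r * (Real.cosh (π * r) / Real.sinh (π * r)) := by
    field_simp
  rw [e2]
  have h2 : Real.cosh (π * r) / Real.sinh (π * r) ≤ 2 := by
    rw [div_le_iff₀ hs]
    nlinarith
  have hp := Real.pi_le_four
  calc _ ≤ 4 * r * 2 := by gcongr
    _ = 8 * r := by ring

lemma K_bounds {r u : ℝ} (hr : 1 ≤ r) (hu : 0 < u) (hur : u ≤ 3/2 * r) :
    Real.cosh (π * r) * |II (2*r) 0 u| ≤ 3 * r ^ (-(1:ℝ)/2) ∧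
    Real.cosh (π * r) * |u * II (2*r) 1 u| ≤ 3 * r ^ ((1:ℝ)/2) := by
  have h := energy_r hr hu
  have hc := Real.cosh_pos (π * r)
  have hr0 : 0 < r := by linarith
  have hQ : 7/4 * r^2 ≤ (2*r)^2 - u^2 := by nlinarith
  have p1 : (r ^ (-(1:ℝ)/2))^2 = r⁻¹ := by
    rw [← Real.rpow_natCast, ← Real.rpow_mul hr0.le, ← Real.rpow_neg_one]; norm_num
  have p2 : (r ^ ((1:ℝ)/2))^2 = r := by
    rw [← Real.rpow_natCast, ← Real.rpow_mul hr0.le]; norm_num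
  constructor
  · refine abs_le_of_sq_le_sq' ?_ (by positivity) |>.2
    rw [mul_pow, mul_pow, p1, sq_abs, ← div_eq_mul_inv, le_div_iff₀ hr0]
    have : Real.cosh (π * r) ^ 2 * (7/4 * r^2 * (II (2*r) 0 u)^2) ≤ 8 * r := by
      refine le_trans ?_ h
      gcongr
      nlinarith [mul_le_mul_of_nonneg_right hQ (sq_nonneg (II (2*r) 0 u)), sq_nonneg (u * II (2*r) 1 u)]
    have h3 : r * (Real.cosh (π * r) ^ 2 * (II (2*r) 0 u)^2 * r * (7/4)) ≤ r * 8 := by linarith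
    have := le_of_mul_le_mul_left h3 hr0
    linarith
  · refine abs_le_of_sq_le_sq' ?_ (by positivity) |>.2
    rw [mul_pow, mul_pow, p2, sq_abs]
    have : Real.cosh (π * r) ^ 2 * (u * II (2*r) 1 u)^2 ≤ 8 * r := by
      refine le_trans ?_ h
      gcongr
      have : 0 ≤ ((2*r)^2 - u^2) * (II (2*r) 0 u)^2 := mul_nonneg (by nlinarith) (sq_nonneg _)
      nlinarith
    linarith
lemma tv_piece {f f' : ℝ → ℝ} (hd : ∀ t, HasDerivAt f (f' t) t) (hc : Continuous f') {p q D : ℝ}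
    (hpq : p ≤ q) (hp : |f p| ≤ D) (hq : |f q| ≤ D)
    (hm : MonotoneOn f (Icc p q) ∨ AntitoneOn f (Icc p q)) :
    ∫ t in p..q, |f' t| ≤ 2 * D := by
  rcases hpq.eq_or_lt with rfl | hlt
  · simp; exact (abs_nonneg _).trans hp
  have hftc : ∫ t in p..q, f' t = f q - f p :=
    intervalIntegral.integral_eq_sub_of_hasDerivAt (fun t _ => hd t) (hc.intervalIntegrable _ _)
  have hw : ∀ t ∈ Icc p q, derivWithin f (Icc p q) t = f' t := fun t ht =>
    (hd t).hasDerivWithinAt.derivWithin (uniqueDiffOn_Icc hlt t ht)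
  rw [abs_le] at hp hq
  rcases hm with hm | hm
  · have : ∫ t in p..q, |f' t| = ∫ t in p..q, f' t := by
      apply intervalIntegral.integral_congr
      intro t ht
      rw [uIcc_of_le hpq] at ht
      have := hm.derivWithin_nonneg (x := t)
      rw [hw t ht] at this
      exact abs_of_nonneg this
    rw [this, hftc]; linarith
  · have : ∫ t in p..q, |f' t| = ∫ t in p..q, -f' t := by
      apply intervalIntegral.integral_congr
      intro t ht
      rw [uIcc_of_le hpq] at ht
      have := hm.derivWithin_nonpos (x := t)
      rw [hw t ht] at this
      exact abs_of_nonpos this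
    rw [this, intervalIntegral.integral_neg, hftc]; linarith

lemma tv_bound {f f' : ℝ → ℝ} (hd : ∀ t, HasDerivAt f (f' t) t) (hc : Continuous f') {D : ℝ}
    (hD : ∀ t, 0 ≤ t → |f t| ≤ D) {M : ℕ} (hM : 0 < M) (hm : PiecewiseMono f M)
    {α β : ℝ} (hα : 0 ≤ α) (hαβ : α ≤ β) :
    ∫ t in α..β, |f' t| ≤ 2 * M * D := by
  obtain ⟨b, hb0, hbm, hb1, hb2⟩ := hm
  have hii : ∀ p q, IntervalIntegrable (fun t => |f' t|) volume p q :=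
    fun p q => (hc.abs).intervalIntegrable _ _
  have hbnn : ∀ i, 0 ≤ b i := fun i => hb0 ▸ hbm (Nat.zero_le i)
  have ind : ∀ i, i < M → ∫ t in (0:ℝ)..b i, |f' t| ≤ 2 * i * D := by
    intro i
    induction i with
    | zero => intro _; simp [hb0]
    | succ i ih =>
      intro hi
      have h1 := ih (by omega)
      have h2 := tv_piece hd hc (hbm (Nat.le_succ i)) (hD _ (hbnn _)) (hD _ (hbnn _)) (hb1 i hi)
      rw [← intervalIntegral.integral_add_adjacent_intervals (hii 0 (b i)) (hii _ _)]
      push_cast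
      have h3 : ∫ t in b i..b (i+1), |f' t| ≤ 2 * D := h2
      linarith
  set N := max β (b (M-1)) with hN
  have hl := ind (M-1) (by omega)
  have hlast : ∫ t in b (M-1)..N, |f' t| ≤ 2 * D := by
    refine tv_piece hd hc (le_max_right _ _) (hD _ (hbnn _)) (hD _ ((hbnn _).trans (le_max_right _ _))) ?_
    rcases hb2 with h | h
    · exact Or.inl (h.mono Icc_subset_Ici_self)
    · exact Or.inr (h.mono Icc_subset_Ici_self)
  have htot : ∫ t in (0:ℝ)..N, |f' t| ≤ 2 * M * D := by
    rw [← intervalIntegral.integral_add_adjacent_intervals (hii 0 (b (M-1))) (hii _ _)]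
    have : ((M - 1 : ℕ) : ℝ) = M - 1 := by
      rw [Nat.cast_sub hM]; simp
    rw [this] at hl
    linarith
  refine le_trans ?_ htot
  exact intervalIntegral.integral_mono_interval hα hαβ (le_max_left _ _)
    (Eventually.of_forall fun t => abs_nonneg _) (hii _ _)

lemma alg_g {r u Q A f : ℝ} (hr : 1 ≤ r) (hu : 0 < u) (hur : u ≤ 3/2 * r) (hQ : 7/4 * r^2 ≤ Q)
    (hf : 0 ≤ f) (hf1 : f ≤ 1) :
    |A / Q + 2 * u * f / Q^2| ≤ |A| * (r^2)⁻¹ + (r^3)⁻¹ := by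
  have hr0 : 0 < r := by linarith
  have hQ0 : 0 < Q := lt_of_lt_of_le (by positivity) hQ
  refine (abs_add_le _ _).trans (add_le_add ?_ ?_)
  · rw [abs_div, abs_of_pos hQ0, div_eq_mul_inv]
    gcongr
    nlinarith
  · rw [abs_of_nonneg (by positivity)]
    calc 2 * u * f / Q^2 ≤ 2 * (3/2 * r) * 1 / (7/4 * r^2)^2 := by gcongr
      _ = (48/49) * (r^3)⁻¹ := by field_simp; norm_num
      _ ≤ (r^3)⁻¹ := by
        have : 0 < (r^3)⁻¹ := by positivity
        linarith

lemma alg_w {r u Q A B β f : ℝ} (hr : 1 ≤ r) (hu : 0 < u) (hur : u ≤ 3/2 * r) (huβ : u ≤ β)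
    (hQ : 7/4 * r^2 ≤ Q)
    (hf : 0 ≤ f) (hf1 : f ≤ 1) :
    |A / Q + u * B / Q + 4 * u^2 * A / Q^2 + 4 * u * f / Q^2 + 8 * u^3 * f / Q^3| ≤
      4 * |A| * (r^2)⁻¹ + β * |B| * (r^2)⁻¹ + 8 * (r^3)⁻¹ := by
  have hr0 : 0 < r := by linarith
  have hβ : 0 < β := by linarith
  have hQ0 : 0 < Q := lt_of_lt_of_le (by positivity) hQ
  have i2 : 0 < (r^2)⁻¹ := by positivity
  have i3 : 0 < (r^3)⁻¹ := by positivity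
  have t1 : |A / Q| ≤ |A| * (r^2)⁻¹ := by
    rw [abs_div, abs_of_pos hQ0, div_eq_mul_inv]
    gcongr
    nlinarith
  have t2 : |u * B / Q| ≤ β * |B| * (r^2)⁻¹ := by
    rw [abs_div, abs_mul, abs_of_pos hQ0, abs_of_pos hu, div_eq_mul_inv]
    gcongr
    nlinarith
  have t3 : |4 * u^2 * A / Q^2| ≤ 3 * |A| * (r^2)⁻¹ := by
    rw [abs_div, abs_mul, abs_of_pos (by positivity : 0 < Q^2), abs_of_pos (by positivity : 0 < 4 * u^2)]
    calc 4 * u^2 * |A| / Q^2 ≤ 4 * (3/2 * r)^2 * |A| / (7/4 * r^2)^2 := by gcongr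
      _ = (144/49) * (|A| * (r^2)⁻¹) := by field_simp; ring
      _ ≤ _ := by nlinarith [mul_nonneg (abs_nonneg A) i2.le]
  have t4 : |4 * u * f / Q^2| ≤ 2 * (r^3)⁻¹ := by
    rw [abs_of_nonneg (by positivity)]
    calc 4 * u * f / Q^2 ≤ 4 * (3/2 * r) * 1 / (7/4 * r^2)^2 := by gcongr
      _ = (96/49) * (r^3)⁻¹ := by field_simp; norm_num
      _ ≤ _ := by linarith
  have t5 : |8 * u^3 * f / Q^3| ≤ 6 * (r^3)⁻¹ := by
    rw [abs_of_nonneg (by positivity)]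
    calc 8 * u^3 * f / Q^3 ≤ 8 * (3/2 * r)^3 * 1 / (7/4 * r^2)^3 := by gcongr
      _ = (1728/343) * (r^3)⁻¹ := by field_simp; norm_num
      _ ≤ _ := by linarith
  have := abs_add_le (A / Q + u * B / Q + 4 * u^2 * A / Q^2 + 4 * u * f / Q^2) (8 * u^3 * f / Q^3)
  have := abs_add_le (A / Q + u * B / Q + 4 * u^2 * A / Q^2) (4 * u * f / Q^2)
  have := abs_add_le (A / Q + u * B / Q) (4 * u^2 * A / Q^2)
  have := abs_add_le (A / Q) (u * B / Q)
  linarith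

lemma core {α β r : ℝ} (hr : 1 ≤ r) (hα : 0 < α) (hαβ : α ≤ β) (hβ : β ≤ 3/2 * r)
    {f f' f'' : ℝ → ℝ} (hd : ∀ t, HasDerivAt f (f' t) t) (hd' : ∀ t, HasDerivAt f' (f'' t) t)
    (hc : Continuous f'') (hf : ∀ t, 0 ≤ f t ∧ f t ≤ 1)
    (hfα : f α = 0) (hfβ : f β = 0) (hf'α : f' α = 0) (hf'β : f' β = 0)
    {V V' : ℝ} (hV : ∫ t in α..β, |f' t| ≤ V) (hV' : ∫ t in α..β, |f'' t| ≤ V') :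
    Real.cosh (π * r) * |∫ u in α..β, II (2*r) 0 u * f u / u| ≤
        3 * r ^ ((1:ℝ)/2) * ((r^2)⁻¹ * (V + 2)) ∧
    Real.cosh (π * r) * |∫ u in α..β, II (2*r) 0 u * f u / u| ≤
        3 * r ^ (-(1:ℝ)/2) * ((r^2)⁻¹ * (4 * V + β * V' + 12)) := by
  have hr0 : 0 < r := by linarith
  have hcosh := Real.cosh_pos (π * r)
  have hc' : Continuous f' := continuous_iff_continuousAt.2 fun t => (hd' t).continuousAt
  have hcf : Continuous f := continuous_iff_continuousAt.2 fun t => (hd t).continuousAt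
  have hI : uIcc α β = Icc α β := uIcc_of_le hαβ
  set ν := 2 * r with hν
  have hpos : ∀ u ∈ uIcc α β, 0 < u := fun u hu => by rw [hI] at hu; exact hα.trans_le hu.1
  have hQ : ∀ u ∈ uIcc α β, 7/4 * r^2 ≤ ν^2 - u^2 := fun u hu => by
    have h0 := hpos u hu
    rw [hI] at hu
    have := hu.2
    nlinarith
  have hQ0 : ∀ u ∈ uIcc α β, 0 < ν^2 - u^2 := fun u hu =>
    lt_of_lt_of_le (by positivity) (hQ u hu)
  have hcI : ∀ k, ContinuousOn (II ν k) (uIcc α β) := fun k u hu =>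
    (II_hasDerivAt ν k (hpos u hu)).continuousAt.continuousWithinAt
  have hne : ∀ u ∈ uIcc α β, ν^2 - u^2 ≠ 0 := fun u hu => (hQ0 u hu).ne'
  have hne2 : ∀ u ∈ uIcc α β, (ν^2 - u^2)^2 ≠ 0 := fun u hu => pow_ne_zero _ (hne u hu)
  have hne3 : ∀ u ∈ uIcc α β, (ν^2 - u^2)^3 ≠ 0 := fun u hu => pow_ne_zero _ (hne u hu)
  set g : ℝ → ℝ := fun u => f' u / (ν^2 - u^2) + 2 * u * f u / (ν^2 - u^2)^2 with hg
  set w' : ℝ → ℝ := fun u => f' u / (ν^2 - u^2) + u * f'' u / (ν^2 - u^2)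
    + 4 * u^2 * f' u / (ν^2 - u^2)^2 + 4 * u * f u / (ν^2 - u^2)^2
    + 8 * u^3 * f u / (ν^2 - u^2)^3 with hw'
  have hQd : ∀ u, HasDerivAt (fun u : ℝ => ν^2 - u^2) (-(2 * u)) u := fun u => by
    have := (hasDerivAt_pow 2 u).const_sub (ν^2)
    simpa using this
  have hψ : ∀ u ∈ uIcc α β, HasDerivAt (fun u => f u / (ν^2 - u^2)) (g u) u := by
    intro u hu
    have h0 := hne u hu
    refine ((hd u).div (hQd u) h0).congr_deriv ?_
    simp only [hg]
    field_simp
    ring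
  have hL : ∀ u ∈ uIcc α β, HasDerivAt (fun u => -(u * II ν 1 u)) (-(ν^2-u^2) * II ν 0 u / u) u := by
    intro u hu
    have h0 := hpos u hu
    refine (((hasDerivAt_id u).mul (II_hasDerivAt ν 1 h0)).neg).congr_deriv ?_
    have ho := II_ode ν h0
    simp only [id]
    rw [eq_div_iff h0.ne']
    linear_combination ho
  have hw : ∀ u ∈ uIcc α β, HasDerivAt (fun u => u * g u) (w' u) u := by
    intro u hu
    have h0 := hne u hu
    have h1 := (hd' u).div (hQd u) h0
    have h2 := (((hasDerivAt_id u).const_mul 2).mul (hd u)).div ((hQd u).pow 2) (hne2 u hu)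
    refine ((hasDerivAt_id u).mul (h1.add h2)).congr_deriv ?_
    simp only [hw', id, Pi.add_apply, Pi.mul_apply, Pi.div_apply, Pi.pow_apply]
    field_simp
    ring
  have hgc : ContinuousOn g (uIcc α β) := by
    refine ContinuousOn.add (ContinuousOn.div (by fun_prop) (by fun_prop) hne)
      (ContinuousOn.div (by fun_prop) (by fun_prop) hne2)
  have hwc : ContinuousOn w' (uIcc α β) := by
    refine ContinuousOn.add (ContinuousOn.add (ContinuousOn.add (ContinuousOn.add ?_ ?_) ?_) ?_) ?_
    · exact ContinuousOn.div (by fun_prop) (by fun_prop) hne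
    · exact ContinuousOn.div (by fun_prop) (by fun_prop) hne
    · exact ContinuousOn.div (by fun_prop) (by fun_prop) hne2
    · exact ContinuousOn.div (by fun_prop) (by fun_prop) hne2
    · exact ContinuousOn.div (by fun_prop) (by fun_prop) hne3
  have hLc : ContinuousOn (fun u => -(ν^2-u^2) * II ν 0 u / u) (uIcc α β) := by
    refine ContinuousOn.div (ContinuousOn.mul (by fun_prop) (hcI 0)) (by fun_prop)
      (fun u hu => (hpos u hu).ne')
  have ibp1 := intervalIntegral.integral_mul_deriv_eq_deriv_mul hψ hL
    hgc.intervalIntegrable hLc.intervalIntegrable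
  have ibp2 := intervalIntegral.integral_mul_deriv_eq_deriv_mul hw
    (fun u hu => II_hasDerivAt ν 0 (hpos u hu))
    hwc.intervalIntegrable (hcI 1).neg.intervalIntegrable
  have S1 : ∫ u in α..β, II ν 0 u * f u / u = ∫ u in α..β, g u * (-(u * II ν 1 u)) := by
    have e : ∫ u in α..β, II ν 0 u * f u / u =
        - ∫ u in α..β, f u / (ν^2 - u^2) * (-(ν^2-u^2) * II ν 0 u / u) := by
      rw [← intervalIntegral.integral_neg]
      apply intervalIntegral.integral_congr
      intro u hu
      have h0 := hne u hu
      have h1 := (hpos u hu).ne'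
      simp only
      field_simp
    rw [e, ibp1, hfα, hfβ]
    simp
  have S2 : ∫ u in α..β, II ν 0 u * f u / u = - ∫ u in α..β, w' u * II ν 0 u := by
    have e : ∫ u in α..β, g u * (-(u * II ν 1 u)) = ∫ u in α..β, u * g u * (-II ν (0+1) u) := by
      apply intervalIntegral.integral_congr
      intro u hu
      simp only [zero_add]
      ring
    rw [S1, e, ibp2]
    simp [hg, hfα, hfβ, hf'α, hf'β]
  have hvol : (β - α) * (r^3)⁻¹ ≤ 3/2 * (r^2)⁻¹ := by
    calc (β - α) * (r^3)⁻¹ ≤ (3/2 * r) * (r^3)⁻¹ := by gcongr; linarith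
      _ = 3/2 * (r^2)⁻¹ := by field_simp
  have ir2 : 0 < (r^2)⁻¹ := by positivity
  have ii1 : IntervalIntegrable (fun t => |f' t|) volume α β := hc'.abs.intervalIntegrable _ _
  have ii2 : IntervalIntegrable (fun t => |f'' t|) volume α β := hc.abs.intervalIntegrable _ _
  have hβ0 : 0 < β := by linarith
  constructor
  · rw [S1, ← abs_of_pos hcosh, ← abs_mul, ← intervalIntegral.integral_const_mul, ← Real.norm_eq_abs]
    have hb := intervalIntegral.norm_integral_le_of_norm_le (μ := volume) hαβ
      (f := fun u => Real.cosh (π * r) * (g u * (-(u * II ν 1 u))))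
      (g := fun u => 3 * r ^ ((1:ℝ)/2) * ((r^2)⁻¹ * |f' u| + (r^3)⁻¹))
      (Eventually.of_forall fun u hu => ?_)
      (((ii1.const_mul _).add (by simp)).const_mul _)
    · refine hb.trans ?_
      rw [intervalIntegral.integral_const_mul, intervalIntegral.integral_add (ii1.const_mul _) (by simp),
        intervalIntegral.integral_const_mul, intervalIntegral.integral_const, smul_eq_mul]
      gcongr
      nlinarith
    · have hu' : u ∈ uIcc α β := by rw [hI]; exact Ioc_subset_Icc_self hu
      have h0 := hpos u hu'
      have hur : u ≤ 3/2 * r := hu.2.trans hβ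
      have k := (K_bounds hr h0 hur).2
      have ag := alg_g (A := f' u) hr h0 hur (hQ u hu') (hf u).1 (hf u).2
      rw [Real.norm_eq_abs, abs_mul, abs_mul, abs_neg, abs_of_pos hcosh]
      calc Real.cosh (π * r) * (|g u| * |u * II ν 1 u|)
          = (Real.cosh (π * r) * |u * II ν 1 u|) * |g u| := by ring
        _ ≤ 3 * r ^ ((1:ℝ)/2) * (|f' u| * (r^2)⁻¹ + (r^3)⁻¹) := by gcongr
        _ = _ := by ring
  · rw [S2, abs_neg, ← abs_of_pos hcosh, ← abs_mul, ← intervalIntegral.integral_const_mul, ← Real.norm_eq_abs]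
    have hb := intervalIntegral.norm_integral_le_of_norm_le (μ := volume) hαβ
      (f := fun u => Real.cosh (π * r) * (w' u * II ν 0 u))
      (g := fun u => 3 * r ^ (-(1:ℝ)/2) * ((4 * (r^2)⁻¹ * |f' u| + β * (r^2)⁻¹ * |f'' u|) + 8 * (r^3)⁻¹))
      (Eventually.of_forall fun u hu => ?_)
      ((((ii1.const_mul _).add (ii2.const_mul _)).add (by simp)).const_mul _)
    · refine hb.trans ?_
      rw [intervalIntegral.integral_const_mul,
        intervalIntegral.integral_add ((ii1.const_mul _).add (ii2.const_mul _)) (by simp),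
        intervalIntegral.integral_add (ii1.const_mul _) (ii2.const_mul _),
        intervalIntegral.integral_const_mul, intervalIntegral.integral_const_mul,
        intervalIntegral.integral_const, smul_eq_mul]
      gcongr
      have q1 := mul_le_mul_of_nonneg_left hV ir2.le
      have q2 := mul_le_mul_of_nonneg_left hV' (mul_nonneg hβ0.le ir2.le)
      linarith
    · have hu' : u ∈ uIcc α β := by rw [hI]; exact Ioc_subset_Icc_self hu
      have h0 := hpos u hu'
      have hur : u ≤ 3/2 * r := hu.2.trans hβ
      have k := (K_bounds hr h0 hur).1
      have ag := alg_w (A := f' u) (B := f'' u) hr h0 hur hu.2 (hQ u hu') (hf u).1 (hf u).2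
      rw [Real.norm_eq_abs, abs_mul, abs_mul, abs_of_pos hcosh]
      calc Real.cosh (π * r) * (|w' u| * |II ν 0 u|)
          = (Real.cosh (π * r) * |II ν 0 u|) * |w' u| := by ring
        _ ≤ 3 * r ^ (-(1:ℝ)/2) * (4 * |f' u| * (r^2)⁻¹ + β * |f'' u| * (r^2)⁻¹ + 8 * (r^3)⁻¹) := by gcongr
        _ = _ := by ring

theorem statement15 :
    ∀ C₀ : ℝ, 0 < C₀ → ∀ M : ℕ, 0 < M →
      ∃ C : ℝ, 0 < C ∧
        ∀ a x T : ℝ, 0 < a → 0 < x → 0 < T → T ≤ x / 3 →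
          ∀ φ : ℝ → ℝ, IsAdmissible a x T C₀ M φ →
            ∀ r : ℝ, max (a / x) 1 ≤ r →
              |phiCheck φ r| ≤ C * min (r ^ (-(3:ℝ)/2)) (r ^ (-(5:ℝ)/2) * x / T) := by
  intro C₀ hC₀ M hM
  refine ⟨3 * (8 * M + 3 * M * C₀ + 12), by positivity, ?_⟩
  intro a x T ha hx hT hTx φ hφ r hr
  obtain ⟨hsm, h01, -, hlow, hhigh, hder, hm1, hm2⟩ := hφ
  have hr1 : 1 ≤ r := (le_max_right _ _).trans hr
  have har : a / x ≤ r := (le_max_left _ _).trans hr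
  have hr0 : 0 < r := by linarith
  have hxT : 0 < x - T := by linarith
  set α := a / (2 * x + 2 * T) with hα
  set β := a / (x - T) with hβ
  have hα0 : 0 < α := by positivity
  have hαβ : α ≤ β := by
    apply div_le_div_of_nonneg_left ha.le hxT; linarith
  have hβx : β ≤ 3/2 * (a / x) := by
    rw [hβ, div_le_iff₀ hxT]
    have e : 3/2 * (a / x) * (x - T) = a * (3/2 * (x - T) / x) := by field_simp
    rw [e]
    have : 1 ≤ 3/2 * (x - T) / x := by rw [le_div_iff₀ hx]; linarith
    nlinarith
  have hβr : β ≤ 3/2 * r := hβx.trans (by linarith)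
  have hinf1 : ContDiff ℝ (⊤ : ℕ∞) (deriv φ) := by
    have := (contDiff_infty_iff_deriv.1 hsm).2
    exact this
  have hinf2 : ContDiff ℝ (⊤ : ℕ∞) (deriv (deriv φ)) := (contDiff_infty_iff_deriv.1 hinf1).2
  have hd : ∀ t, HasDerivAt φ (deriv φ t) t := fun t =>
    ((contDiff_infty_iff_deriv.1 hsm).1 t).hasDerivAt
  have hd' : ∀ t, HasDerivAt (deriv φ) (deriv (deriv φ) t) t := fun t =>
    ((contDiff_infty_iff_deriv.1 hinf1).1 t).hasDerivAt
  have hφα : φ α = 0 := hlow α le_rfl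
  have hφβ : φ β = 0 := hhigh β le_rfl
  have hz : ∀ t, φ t = 0 → deriv φ t = 0 := fun t ht => by
    have : IsLocalMin φ t := Filter.Eventually.of_forall fun s => by rw [ht]; exact (h01 s).1
    exact this.deriv_eq_zero
  have hV := tv_bound hd hinf1.continuous (D := 1)
    (fun t _ => by rw [abs_of_nonneg (h01 t).1]; exact (h01 t).2) hM hm1 hα0.le hαβ
  have hV' := tv_bound hd' hinf2.continuous hder hM hm2 hα0.le hαβ
  obtain ⟨b1, b2⟩ := core hr1 hα0 hαβ hβr hd hd' hinf2.continuous h01 hφα hφβ (hz _ hφα) (hz _ hφβ)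
    hV hV'
  have hS : ∫ u in Set.Ioi (0:ℝ), KBessel (2 * r) u * φ u / u =
      ∫ u in α..β, II (2*r) 0 u * φ u / u := by
    simp only [II_zero]
    rw [intervalIntegral.integral_of_le hαβ]
    refine setIntegral_eq_of_subset_of_forall_sdiff_eq_zero measurableSet_Ioi
      (fun u hu => hα0.trans hu.1) ?_
    intro u hu
    have : φ u = 0 := by
      by_cases h : α < u
      · by_cases h2 : u ≤ β
        · exact absurd ⟨h, h2⟩ hu.2
        · exact hhigh u (not_le.1 h2).le
      · exact hlow u (not_lt.1 h)
    simp [this]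
  have hP : |phiCheck φ r| = Real.cosh (π * r) * |∫ u in α..β, II (2*r) 0 u * φ u / u| := by
    rw [phiCheck, hS, abs_mul, abs_of_pos (Real.cosh_pos _)]
  rw [← hP] at b1 b2
  have p2 : (r^2)⁻¹ = r ^ (-(2:ℝ)) := by
    rw [Real.rpow_neg hr0.le, Real.rpow_two]
  have p3 : r ^ ((1:ℝ)/2) * (r^2)⁻¹ = r ^ (-(3:ℝ)/2) := by
    rw [p2, ← Real.rpow_add hr0]; norm_num
  have p5 : r ^ (-(1:ℝ)/2) * (r^2)⁻¹ = r ^ (-(5:ℝ)/2) := by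
    rw [p2, ← Real.rpow_add hr0]; norm_num
  have hM1 : (1:ℝ) ≤ M := by exact_mod_cast hM
  have hMC : 0 ≤ M * C₀ := by positivity
  rcases min_choice (r ^ (-(3:ℝ)/2)) (r ^ (-(5:ℝ)/2) * x / T) with h | h
  · rw [h]
    calc |phiCheck φ r| ≤ 3 * (2 * M * 1 + 2) * (r ^ ((1:ℝ)/2) * (r^2)⁻¹) := by
          refine b1.trans (le_of_eq (by ring))
      _ = 3 * (2 * M * 1 + 2) * r ^ (-(3:ℝ)/2) := by rw [p3]
      _ ≤ _ := by
          gcongr ?_ * _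
          nlinarith
  · rw [h]
    have hxT3 : 1 ≤ x / T := by rw [le_div_iff₀ hT]; linarith
    have hβD : β * (C₀ * x^2 / (a * T)) ≤ 3/2 * C₀ * (x / T) := by
      calc β * (C₀ * x^2 / (a * T)) ≤ (3/2 * (a / x)) * (C₀ * x^2 / (a * T)) := by gcongr
        _ = _ := by field_simp
    have key : 4 * (2 * M * 1) + β * (2 * M * (C₀ * x^2 / (a * T))) + 12 ≤
        (8 * M + 3 * M * C₀ + 12) * (x / T) := by
      have := mul_le_mul_of_nonneg_left hβD (by positivity : (0:ℝ) ≤ 2 * M)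
      nlinarith
    calc |phiCheck φ r| ≤ 3 * (4 * (2 * M * 1) + β * (2 * M * (C₀ * x^2 / (a * T))) + 12) *
            (r ^ (-(1:ℝ)/2) * (r^2)⁻¹) := by
          refine b2.trans (le_of_eq (by ring))
      _ = 3 * (4 * (2 * M * 1) + β * (2 * M * (C₀ * x^2 / (a * T))) + 12) * r ^ (-(5:ℝ)/2) := by rw [p5]
      _ ≤ 3 * ((8 * M + 3 * M * C₀ + 12) * (x / T)) * r ^ (-(5:ℝ)/2) := by gcongr
      _ = _ := by ring
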